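/- arXiv:2202.01033 — 4 statements merged into one kernel-verified Lean document; each statement's English description precedes it below -/
import Mathlib

section
/- For every leader's decision x = (x₁, x₂) in the box [x̲₁, x̄₁] × [x̲₂, x̄₂] and every y ∈ S(x), the leader's objective satisfies F(x, y) = −x₁ + x₂ ≤ −x̲₁ + x̄₂, and equality F(x, y) = −x̲₁ + x̄₂ holds if and only if x = (x̲₁, x̄₂). Hence the bilevel problem of maximizing F(x, y) over x in the box subject to y ∈ S(x) has the unique optimal leader's decision x* = (x̲₁, x̄₂) with optimal objective value F* = −x̲₁ + x̄₂. -/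
/-!
On `Ω(x)` the chain `yᵢ² ≤ yᵢ₊₁` telescopes to `y₁ ^ 2^(n-1) ≤ yₙ` (`Omega_chain`). Together with
`y₁ + yₙ = 1/2` this forces `yₙ > 0` (`Omega_last_pos`). The factor `x₁ + x₂ - y_{n+1} - y_{n+2}`
is nonnegative on `Ω(x)` and can be made zero by moving `(y_{n+1}, y_{n+2})` to `(x₁, x₂)`, which
leaves the other constraints untouched; as its coefficient `-yₙ` is strictly negative, it vanishes
at every maximizer. Hence `y_{n+1} = x₁` and `y_{n+2} = x₂` on `S(x)`, so that `F = -x₁ + x₂`.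

A maximizer exists: let `t ≥ 0` solve `t + t ^ 2^(n-1) = 1/2` and take `yᵢ = t ^ 2^(i-1)` for
`i ≤ n`, with `(y_{n+1}, y_{n+2}) = (x₁, x₂)`. Its objective value is `t`, whereas every feasible
point has `f ≤ y₁` and `y₁ + y₁ ^ 2^(n-1) ≤ 1/2`, so `y₁ ≤ t` by monotonicity.
-/

/-- The lower-level feasible set `Ω(x)` of the bilevel example: points
`y ∈ ℝ^{n+2}` (0-indexed: Lean index `j` corresponds to math index `j+1`) with
`y₁ + yₙ = 1/2`, `yᵢ² ≤ yᵢ₊₁` for `i = 1,…,n−1`, `yᵢ ≥ 0` for `i = 1,…,n`,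
`0 ≤ y_{n+1} ≤ x₁`, and `−x₂ ≤ y_{n+2} ≤ x₂`. -/
def Omega (n : ℕ) (x1 x2 : ℝ) : Set (Fin (n + 2) → ℝ) :=
  {y | y ⟨0, by omega⟩ + y ⟨n - 1, by omega⟩ = 1 / 2 ∧
    (∀ i : ℕ, ∀ _h1 : 1 ≤ i, ∀ _h2 : i ≤ n - 1,
      (y ⟨i - 1, by omega⟩) ^ 2 ≤ y ⟨i, by omega⟩) ∧
    (∀ i : ℕ, ∀ _h1 : 1 ≤ i, ∀ _h2 : i ≤ n, 0 ≤ y ⟨i - 1, by omega⟩) ∧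
    0 ≤ y ⟨n, by omega⟩ ∧ y ⟨n, by omega⟩ ≤ x1 ∧
    -x2 ≤ y ⟨n + 1, by omega⟩ ∧ y ⟨n + 1, by omega⟩ ≤ x2}

/-- The follower's objective `f(x, y) = y₁ − yₙ (x₁ + x₂ − y_{n+1} − y_{n+2})`. -/
noncomputable def follower (n : ℕ) (x1 x2 : ℝ) (y : Fin (n + 2) → ℝ) : ℝ :=
  y ⟨0, by omega⟩ -
    y ⟨n - 1, by omega⟩ * (x1 + x2 - y ⟨n, by omega⟩ - y ⟨n + 1, by omega⟩)

/-- The set `S(x)` of maximizers of the follower's objective over `Ω(x)`. -/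
def SOpt (n : ℕ) (x1 x2 : ℝ) : Set (Fin (n + 2) → ℝ) :=
  {y | y ∈ Omega n x1 x2 ∧
    ∀ y' ∈ Omega n x1 x2, follower n x1 x2 y' ≤ follower n x1 x2 y}

/-- The leader's objective `F(x, y) = x₁ − 2 y_{n+1} + y_{n+2}`. -/
noncomputable def leader (n : ℕ) (x1 : ℝ) (y : Fin (n + 2) → ℝ) : ℝ :=
  x1 - 2 * y ⟨n, by omega⟩ + y ⟨n + 1, by omega⟩

lemma Omega_chain {n : ℕ} {x1 x2 : ℝ} {y : Fin (n + 2) → ℝ} (hy : y ∈ Omega n x1 x2) (k : ℕ)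
    (hk : k ≤ n - 1) : y ⟨0, by omega⟩ ^ 2 ^ k ≤ y ⟨k, by omega⟩ := by
  obtain ⟨-, hsq, hnn, -⟩ := hy
  induction k with
  | zero => simp
  | succ k ih =>
    have h0 : 0 ≤ y ⟨0, by omega⟩ := hnn 1 le_rfl (by omega)
    have h1 : y ⟨k, by omega⟩ ^ 2 ≤ y ⟨k + 1, by omega⟩ := hsq (k + 1) (by omega) hk
    calc y ⟨0, by omega⟩ ^ 2 ^ (k + 1) = (y ⟨0, by omega⟩ ^ 2 ^ k) ^ 2 := by
          rw [pow_succ, pow_mul]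
      _ ≤ y ⟨k, by omega⟩ ^ 2 := pow_le_pow_left₀ (pow_nonneg h0 _) (ih (by omega)) 2
      _ ≤ _ := h1

/-- If `yₙ = 0` then `y₁ = 1/2`, contradicting `y₁ ^ 2^(n-1) ≤ yₙ`. -/
lemma Omega_last_pos {n : ℕ} (hn : 2 ≤ n) {x1 x2 : ℝ} {y : Fin (n + 2) → ℝ}
    (hy : y ∈ Omega n x1 x2) : 0 < y ⟨n - 1, by omega⟩ := by
  have hc := Omega_chain hy (n - 1) le_rfl
  obtain ⟨hsum, -, hnn, -⟩ := hy
  have h0 : 0 ≤ y ⟨n - 1, by omega⟩ := hnn n (by omega) le_rfl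
  rcases h0.lt_or_eq with h | h
  · exact h
  · have h1 : y ⟨0, by omega⟩ = 1 / 2 := by linarith
    rw [h1, ← h] at hc
    exact absurd hc (not_le.mpr (by positivity))

/-- Moving the last two coordinates of a feasible point to `(x₁, x₂)` keeps it feasible and raises
the follower's objective to `y₁`. Optimality of `y` then forces the nonnegative product
`yₙ (x₁ + x₂ - y_{n+1} - y_{n+2})` to vanish. -/
lemma SOpt_last {n : ℕ} (hn : 2 ≤ n) {x1 x2 : ℝ} {y : Fin (n + 2) → ℝ} (hx1 : 0 ≤ x1)
    (hx2 : 0 ≤ x2) (hy : y ∈ SOpt n x1 x2) :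
    y ⟨n, by omega⟩ = x1 ∧ y ⟨n + 1, by omega⟩ = x2 := by
  obtain ⟨hyO, hmax⟩ := hy
  have hpos := Omega_last_pos hn hyO
  obtain ⟨hsum, hsq, hnn, ha0, ha1, hb0, hb1⟩ := hyO
  let y' : Fin (n + 2) → ℝ := fun j =>
    if (j : ℕ) < n then y j else if (j : ℕ) = n then x1 else x2
  have hlt : ∀ (j : ℕ) (hj : j < n), y' ⟨j, by omega⟩ = y ⟨j, by omega⟩ := fun j hj => by
    simp [y', hj]
  have hn0 : y' ⟨n, by omega⟩ = x1 := by simp [y']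
  have hn1 : y' ⟨n + 1, by omega⟩ = x2 := by simp [y']
  have hy' : y' ∈ Omega n x1 x2 := by
    refine ⟨?_, fun i h1 h2 => ?_, fun i h1 h2 => ?_, ?_, ?_, ?_, ?_⟩
    · rw [hlt 0 (by omega), hlt (n - 1) (by omega)]; exact hsum
    · rw [hlt (i - 1) (by omega), hlt i (by omega)]; exact hsq i h1 h2
    · rw [hlt (i - 1) (by omega)]; exact hnn i h1 h2
    all_goals linarith
  have h := hmax y' hy'
  unfold follower at h
  rw [hlt 0 (by omega), hlt (n - 1) (by omega), hn0, hn1] at h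
  have hgap : x1 + x2 - y ⟨n, by omega⟩ - y ⟨n + 1, by omega⟩ ≤ 0 := by
    by_contra! hc
    have := mul_pos hpos hc
    linarith
  constructor <;> linarith

lemma SOpt_nonempty {n : ℕ} (hn : 2 ≤ n) {x1 x2 : ℝ} (hx1 : 0 ≤ x1) (hx2 : 0 ≤ x2) :
    (SOpt n x1 x2).Nonempty := by
  obtain ⟨t, ⟨ht0, -⟩, ht⟩ : ∃ t ∈ Set.Icc (0 : ℝ) 1, t + t ^ 2 ^ (n - 1) = 1 / 2 := by
    have hc : ContinuousOn (fun t : ℝ => t + t ^ 2 ^ (n - 1)) (Set.Icc 0 1) := by fun_prop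
    refine intermediate_value_Icc zero_le_one hc ⟨?_, ?_⟩
    · simp
    · norm_num
  let y : Fin (n + 2) → ℝ := fun j =>
    if (j : ℕ) < n then t ^ 2 ^ (j : ℕ) else if (j : ℕ) = n then x1 else x2
  have hlt : ∀ (j : ℕ) (hj : j < n), y ⟨j, by omega⟩ = t ^ 2 ^ j := fun j hj => by
    simp [y, hj]
  have hn0 : y ⟨n, by omega⟩ = x1 := by simp [y]
  have hn1 : y ⟨n + 1, by omega⟩ = x2 := by simp [y]
  refine ⟨y, ⟨?_, fun i h1 h2 => ?_, fun i h1 h2 => ?_, ?_, ?_, ?_, ?_⟩, fun y' hy' => ?_⟩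
  · rw [hlt 0 (by omega), hlt (n - 1) (by omega)]; simpa using ht
  · obtain ⟨k, rfl⟩ : ∃ k, i = k + 1 := ⟨i - 1, by omega⟩
    rw [hlt (k + 1 - 1) (by omega), hlt (k + 1) (by omega), Nat.add_sub_cancel, ← pow_mul,
      ← pow_succ]
  · rw [hlt (i - 1) (by omega)]; positivity
  iterate 4 linarith
  · have hval : follower n x1 x2 y = t := by
      unfold follower
      rw [hlt 0 (by omega), hn0, hn1]; ring
    have hpos := Omega_last_pos hn hy'
    have hc := Omega_chain hy' (n - 1) le_rfl
    obtain ⟨hsum, -, hnn, ha0, ha1, hb0, hb1⟩ := hy'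
    have hf : follower n x1 x2 y' ≤ y' ⟨0, by omega⟩ := by
      have := mul_nonneg hpos.le
        (show 0 ≤ x1 + x2 - y' ⟨n, by omega⟩ - y' ⟨n + 1, by omega⟩ by linarith)
      unfold follower
      linarith
    rw [hval]
    refine hf.trans ?_
    by_contra! hlt'
    have := pow_le_pow_left₀ ht0 hlt'.le (2 ^ (n - 1))
    linarith

/-- For every leader's decision `x` in the box and every `y ∈ S(x)`, the
leader's objective satisfies `F(x, y) = −x₁ + x₂ ≤ −x̲₁ + x̄₂`, with equality
iff `x = (x̲₁, x̄₂)`. Hence the bilevel problem has the unique optimal leader's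
decision `x* = (x̲₁, x̄₂)` with optimal value `F* = −x̲₁ + x̄₂` (which is
attained, since `S(x*)` is nonempty). -/
theorem stmt7 (n : ℕ) (hn : 2 ≤ n)
    (xl1 xl2 xu1 xu2 : ℝ) (hl1 : 1 ≤ xl1) (hl2 : 1 ≤ xl2)
    (hu1 : xl1 < xu1) (hu2 : xl2 < xu2) :
    (∀ x1 x2 : ℝ, x1 ∈ Set.Icc xl1 xu1 → x2 ∈ Set.Icc xl2 xu2 →
      ∀ y ∈ SOpt n x1 x2,
        leader n x1 y = -x1 + x2 ∧
        leader n x1 y ≤ -xl1 + xu2 ∧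
        (leader n x1 y = -xl1 + xu2 ↔ x1 = xl1 ∧ x2 = xu2)) ∧
    (SOpt n xl1 xu2).Nonempty := by
  refine ⟨?_, SOpt_nonempty hn (by linarith) (by linarith)⟩
  rintro x1 x2 ⟨h1, h1'⟩ ⟨h2, h2'⟩ y hy
  obtain ⟨ha, hb⟩ := SOpt_last hn (by linarith) (by linarith) hy
  have hF : leader n x1 y = -x1 + x2 := by
    unfold leader
    rw [ha, hb]; ring
  refine ⟨hF, by linarith, fun h => ⟨by linarith, by linarith⟩, ?_⟩
  rintro ⟨rfl, rfl⟩
  exact hF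
end

section
/- Let ε ≥ 2^{−2^{n−1}}. For every leader's decision x = (x₁, x₂) in the box [x̲₁, x̄₁] × [x̲₂, x̄₂], the pessimistic value min { F(x, y) : y a maximizer of f(x, ·) over Ω_ε(x) } equals −x₁ − x₂, attained at a maximizer y with y_{n+1} = x₁ and y_{n+2} = −x₂. Consequently, the pessimistic ε-feasible bilevel optimal value max over x in the box of this quantity equals −x̲₁ − x̲₂ and is attained uniquely at the leader's decision x* = (x̲₁, x̲₂). -/
/-!
The follower's objective is at most `1/2` on `Ω_ε(x)`: the slack `x₁ + x₂ − y_{n+1} − y_{n+2}` and `yₙ`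
are nonnegative there, and `y₁ = 1/2 − yₙ ≤ 1/2`. When `ε ≥ 2^(−2^(n−1))` this bound is reached
however large the slack: squaring `1/2` repeatedly gives `y_i = 2^(−2^(i−1))` for `i < n`, and the last
quadratic constraint `y_{n−1}² ≤ yₙ + ε` then holds with `yₙ = 0` (`witness_mem_OmegaEps`). Since `yₙ = 0`,
the last two coordinates do not affect `f`, so they may be chosen as the leader's worst case `(x₁, −x₂)`,
at which `F` attains its minimum over all of `Ω_ε(x)`. The function `−x₁ − x₂` on the box is strictly
decreasing in each coordinate, so its only maximizer is the lower corner.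
-/

/-- The set `Ω_ε(x)` of ε-feasible points: all linear constraints of `Ω(x)`
hold exactly and each quadratic constraint may be violated by at most `ε`. -/
def OmegaEps (n : ℕ) (x1 x2 ε : ℝ) : Set (Fin (n + 2) → ℝ) :=
  {y | y ⟨0, by omega⟩ + y ⟨n - 1, by omega⟩ = 1 / 2 ∧
    (∀ i : ℕ, ∀ _h1 : 1 ≤ i, ∀ _h2 : i ≤ n - 1,
      (y ⟨i - 1, by omega⟩) ^ 2 ≤ y ⟨i, by omega⟩ + ε) ∧
    (∀ i : ℕ, ∀ _h1 : 1 ≤ i, ∀ _h2 : i ≤ n, 0 ≤ y ⟨i - 1, by omega⟩) ∧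
    0 ≤ y ⟨n, by omega⟩ ∧ y ⟨n, by omega⟩ ≤ x1 ∧
    -x2 ≤ y ⟨n + 1, by omega⟩ ∧ y ⟨n + 1, by omega⟩ ≤ x2}

/-- The set of maximizers of the follower's objective over `Ω_ε(x)`. -/
def SEps (n : ℕ) (x1 x2 ε : ℝ) : Set (Fin (n + 2) → ℝ) :=
  {y | y ∈ OmegaEps n x1 x2 ε ∧
    ∀ y' ∈ OmegaEps n x1 x2 ε, follower n x1 x2 y' ≤ follower n x1 x2 y}

theorem follower_le_half {n : ℕ} (hn : 2 ≤ n) {x1 x2 ε : ℝ} {y : Fin (n + 2) → ℝ}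
    (hy : y ∈ OmegaEps n x1 x2 ε) : follower n x1 x2 y ≤ 1 / 2 := by
  obtain ⟨hsum, -, hnonneg, -, h1, -, h2⟩ := hy
  have hlast := hnonneg n (by omega) le_rfl
  have hslack : 0 ≤ x1 + x2 - y ⟨n, by omega⟩ - y ⟨n + 1, by omega⟩ := by linarith
  have hprod := mul_nonneg hlast hslack
  unfold follower
  linarith

/-- The pessimistic response of the follower, with coordinates indexed from `0`: iterated squares of
`1/2` in positions `0, …, n − 2`, then `0`, then the pair `(x₁, −x₂)` that is worst for the leader. -/
noncomputable def witness (n : ℕ) (x1 x2 : ℝ) (j : Fin (n + 2)) : ℝ :=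
  if j.val < n - 1 then (1 / 2) ^ 2 ^ j.val
  else if j.val < n then 0 else if j.val = n then x1 else -x2

theorem witness_of_lt {n : ℕ} (x1 x2 : ℝ) {i : ℕ} (hi : i < n - 1) :
    witness n x1 x2 ⟨i, by omega⟩ = (1 / 2) ^ 2 ^ i := by
  simp [witness, hi]

theorem witness_last {n : ℕ} (hn : 2 ≤ n) (x1 x2 : ℝ) :
    witness n x1 x2 ⟨n - 1, by omega⟩ = 0 := by
  have : n - 1 < n := by omega
  simp [witness, this]

theorem witness_n (n : ℕ) (x1 x2 : ℝ) : witness n x1 x2 ⟨n, by omega⟩ = x1 := by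
  have : ¬ n < n - 1 := by omega
  simp [witness, this]

theorem witness_n_add_one (n : ℕ) (x1 x2 : ℝ) :
    witness n x1 x2 ⟨n + 1, by omega⟩ = -x2 := by
  have : ¬ n + 1 < n - 1 := by omega
  simp [witness, this]

theorem witness_mem_OmegaEps {n : ℕ} (hn : 2 ≤ n) {x1 x2 ε : ℝ} (hx1 : 0 ≤ x1) (hx2 : 0 ≤ x2)
    (hε : 1 / 2 ^ 2 ^ (n - 1) ≤ ε) : witness n x1 x2 ∈ OmegaEps n x1 x2 ε := by
  have hε0 : 0 ≤ ε := le_trans (by positivity) hε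
  refine ⟨?_, fun i h1 h2 => ?_, fun i h1 h2 => ?_, ?_, ?_, ?_, ?_⟩
  · rw [witness_of_lt x1 x2 (by omega), witness_last hn]
    norm_num
  · have hsq : (((1 : ℝ) / 2) ^ 2 ^ (i - 1)) ^ 2 = (1 / 2) ^ 2 ^ i := by
      rw [← pow_mul, ← pow_succ, Nat.sub_add_cancel h1]
    rw [witness_of_lt x1 x2 (i := i - 1) (by omega), hsq]
    rcases h2.lt_or_eq with h | rfl
    · rw [witness_of_lt x1 x2 h]
      linarith
    -- The only constraint that uses the lower bound on `ε`.
    · rw [witness_last hn, one_div_pow]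
      linarith
  · rcases Nat.lt_or_ge (i - 1) (n - 1) with h | h
    · rw [witness_of_lt x1 x2 h]
      positivity
    · obtain rfl : i = n := by omega
      exact (witness_last hn x1 x2).ge
  · rw [witness_n]; exact hx1
  · rw [witness_n]
  · rw [witness_n_add_one]
  · rw [witness_n_add_one]; linarith

theorem witness_mem_SEps {n : ℕ} (hn : 2 ≤ n) {x1 x2 ε : ℝ} (hx1 : 0 ≤ x1) (hx2 : 0 ≤ x2)
    (hε : 1 / 2 ^ 2 ^ (n - 1) ≤ ε) : witness n x1 x2 ∈ SEps n x1 x2 ε := by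
  refine ⟨witness_mem_OmegaEps hn hx1 hx2 hε, fun y' hy' => (follower_le_half hn hy').trans ?_⟩
  unfold follower
  rw [witness_of_lt x1 x2 (by omega), witness_last hn]
  norm_num

theorem leader_witness (n : ℕ) (x1 x2 : ℝ) :
    leader n x1 (witness n x1 x2) = -x1 - x2 := by
  unfold leader
  rw [witness_n, witness_n_add_one]
  ring

/-- Let `ε ≥ 2^(−2^(n−1))`. For every leader's decision `x` in the box, the
pessimistic value `min { F(x, y) : y maximizer of f(x, ·) over Ω_ε(x) }`
equals `−x₁ − x₂`, attained at a maximizer `y` with `y_{n+1} = x₁` and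
`y_{n+2} = −x₂`. Consequently, the pessimistic ε-feasible bilevel optimal
value (the max over `x` in the box of this quantity) equals `−x̲₁ − x̲₂` and
is attained uniquely at `x* = (x̲₁, x̲₂)`. -/
theorem stmt13 (n : ℕ) (hn : 2 ≤ n)
    (xl1 xl2 xu1 xu2 : ℝ) (hl1 : 1 ≤ xl1) (hl2 : 1 ≤ xl2)
    (hu1 : xl1 < xu1) (hu2 : xl2 < xu2)
    (ε : ℝ) (hε : 1 / 2 ^ 2 ^ (n - 1) ≤ ε) :
    (∀ x1 x2 : ℝ, x1 ∈ Set.Icc xl1 xu1 → x2 ∈ Set.Icc xl2 xu2 →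
      IsLeast {v : ℝ | ∃ y ∈ SEps n x1 x2 ε, v = leader n x1 y} (-x1 - x2) ∧
      ∃ y ∈ SEps n x1 x2 ε,
        y ⟨n, by omega⟩ = x1 ∧ y ⟨n + 1, by omega⟩ = -x2 ∧
        leader n x1 y = -x1 - x2) ∧
    IsGreatest
      {w : ℝ | ∃ x1 x2 : ℝ, x1 ∈ Set.Icc xl1 xu1 ∧ x2 ∈ Set.Icc xl2 xu2 ∧
        w = -x1 - x2}
      (-xl1 - xl2) ∧
    (∀ x1 x2 : ℝ, x1 ∈ Set.Icc xl1 xu1 → x2 ∈ Set.Icc xl2 xu2 →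
      -x1 - x2 = -xl1 - xl2 → x1 = xl1 ∧ x2 = xl2) := by
  refine ⟨fun x1 x2 hx1 hx2 => ?_, ⟨⟨xl1, xl2, ⟨le_rfl, hu1.le⟩, ⟨le_rfl, hu2.le⟩, rfl⟩, ?_⟩, ?_⟩
  · have hmem : witness n x1 x2 ∈ SEps n x1 x2 ε :=
      witness_mem_SEps hn (by linarith [hx1.1]) (by linarith [hx2.1]) hε
    refine ⟨⟨⟨_, hmem, (leader_witness n x1 x2).symm⟩, ?_⟩,
      _, hmem, witness_n n x1 x2, witness_n_add_one n x1 x2, leader_witness n x1 x2⟩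
    rintro v ⟨y, ⟨⟨-, -, -, -, h1, h2, -⟩, -⟩, rfl⟩
    unfold leader
    linarith
  · rintro w ⟨x1, x2, hx1, hx2, rfl⟩
    linarith [hx1.1, hx2.1]
  · intro x1 x2 hx1 hx2 h
    constructor <;> linarith [hx1.1, hx2.1]
end

section
/- Under the stated assumptions on the linear bilevel problem, there exists a constant κ > 0 (depending only on A, C, D, a, b, d) such that the following holds: for every x ∈ ℝ^{n_x} with A x ≥ a, every ε > 0, and every pair (ŷ, ẑ) ∈ ℝ^{n_y} × ℝ^ℓ satisfying (i) D ŷ ≥ b − C x − ε e_ℓ, (ii) ‖D^⊤ẑ − d‖_∞ ≤ ε and ẑ ≥ −ε e_ℓ, and (iii) d^⊤ŷ − (b − C x)^⊤ẑ ≤ ε, there exists an optimal solution y* of the x-parameterized lower-level problem (i.e., D y* ≥ b − C x and d^⊤y* ≤ d^⊤y for every y with D y ≥ b − C x) with ‖y* − ŷ‖₁ ≤ ε κ. -/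
open Matrix

/-! The set of optimal solutions of the lower-level problem is the polyhedron
`{y : D y ≥ b - C x, -dᵀ y ≥ -v}`, where `v` is the optimal value at `x`. Its constraint matrix does
not depend on `x`, so Hoffman's error bound (`exists_hoffman_bound`) gives a constant, uniform in the
right-hand side, that controls the distance from `ŷ` to this set by the largest violation of the
constraints at `ŷ`. The rows of `D` are violated by at most `ε` by (i). For the objective row, pair
the nonnegative slack of an optimal `y` with the nonnegative vector `ẑ + ε e`; with (ii) and (iii)
this gives `dᵀ ŷ - v ≤ ε (1 + ‖y‖₁ + eᵀ (C x + D y - b))`, and the bracket is bounded because the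
joint feasible set is compact (`objective_gap_le`). Only weak duality is needed.

Hoffman's bound is proved by Fourier–Motzkin elimination, by induction on the number of variables.
Eliminating a variable yields a system with a fixed matrix in one variable less, whose rows are
nonnegative combinations of the given ones, so violations grow by at most a constant factor. A nearby
solution of the smaller system is lifted by moving the eliminated coordinate to the nearest point of
a nonempty interval (`exists_near_solution_one_var`).
-/

/-- A system `s i ≤ c i * t` in one variable with some constraint of positive coefficient violated
at `t₀`: the largest lower bound on `t` is a solution, as the pairwise conditions `hpair` keep it
below all upper bounds, and it exceeds `t₀` by at most `δ` divided by its coefficient. -/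
lemma exists_near_solution_of_lower_violated {ι : Type} [Fintype ι] (c s : ι → ℝ) (t₀ δ : ℝ)
    (hδ : 0 ≤ δ) (hzero : ∀ i, c i = 0 → s i ≤ 0)
    (hpair : ∀ i j, 0 < c i → c j < 0 → -c j * s i + c i * s j ≤ 0)
    (hviol : ∀ i, s i - δ ≤ c i * t₀) (i₀ : ι) (hi₀ : 0 < c i₀) (hs₀ : c i₀ * t₀ < s i₀) :
    ∃ t, (∀ i, s i ≤ c i * t) ∧ |t - t₀| ≤ (∑ i, |c i|⁻¹) * δ := by
  classical
  obtain ⟨p, hp, hmax⟩ := Finset.exists_max_image (Finset.univ.filter fun i => 0 < c i)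
    (fun i => s i / c i) ⟨i₀, by simpa using hi₀⟩
  have hcp : 0 < c p := by simpa using hp
  have hlow : t₀ < s p / c p := by
    have h1 : s i₀ / c i₀ ≤ s p / c p := hmax i₀ (by simpa using hi₀)
    have h2 : t₀ < s i₀ / c i₀ := by rw [lt_div_iff₀ hi₀]; linarith
    linarith
  refine ⟨s p / c p, fun i => ?_, ?_⟩
  · rcases lt_trichotomy (c i) 0 with h | h | h
    · have := hpair p i hcp h
      rw [← mul_div_assoc, le_div_iff₀ hcp]
      linarith
    · have := hzero i h
      rw [h]; linarith
    · have h1 : s i / c i ≤ s p / c p := hmax i (by simpa using h)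
      rw [div_le_iff₀ h] at h1
      linarith
  · rw [abs_of_pos (by linarith)]
    have h1 : s p / c p - t₀ ≤ |c p|⁻¹ * δ := by
      rw [abs_of_pos hcp, ← div_eq_inv_mul, sub_le_iff_le_add, div_le_iff₀ hcp, add_mul,
        div_mul_cancel₀ _ hcp.ne']
      linarith [hviol p]
    refine h1.trans (mul_le_mul_of_nonneg_right ?_ hδ)
    exact Finset.single_le_sum (f := fun i => |c i|⁻¹) (fun i _ => by positivity)
      (Finset.mem_univ p)

/-- Hoffman's bound in one variable. The conditions `hzero` and `hpair` are the result of
eliminating `t` from the system `s i ≤ c i * t`. -/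
lemma exists_near_solution_one_var {ι : Type} [Fintype ι] (c s : ι → ℝ) (t₀ δ : ℝ)
    (hδ : 0 ≤ δ) (hzero : ∀ i, c i = 0 → s i ≤ 0)
    (hpair : ∀ i j, 0 < c i → c j < 0 → -c j * s i + c i * s j ≤ 0)
    (hviol : ∀ i, s i - δ ≤ c i * t₀) :
    ∃ t, (∀ i, s i ≤ c i * t) ∧ |t - t₀| ≤ (∑ i, |c i|⁻¹) * δ := by
  by_cases hall : ∀ i, s i ≤ c i * t₀
  · refine ⟨t₀, hall, ?_⟩
    rw [sub_self, abs_zero]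
    exact mul_nonneg (Finset.sum_nonneg fun i _ => by positivity) hδ
  push Not at hall
  obtain ⟨i, hi⟩ := hall
  rcases lt_trichotomy (c i) 0 with h | h | h
  · -- A violated upper bound becomes a violated lower bound under `t ↦ -t`.
    obtain ⟨t, ht, htt⟩ := exists_near_solution_of_lower_violated (fun i => -c i) s (-t₀) δ hδ
      (fun i hi => hzero i (by simpa using hi))
      (fun i j hi hj => by
        have := hpair j i (by linarith) (by linarith)
        linarith)
      (fun i => by linarith [hviol i]) i (by linarith) (by linarith)
    refine ⟨-t, fun i => by linarith [ht i], ?_⟩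
    rw [show -t - t₀ = -(t - -t₀) by ring, abs_neg]
    simpa using htt
  · have := hzero i h
    rw [h] at hi
    linarith
  · exact exists_near_solution_of_lower_violated c s t₀ δ hδ hzero hpair hviol i h hi

lemma abs_dotProduct_sub_le {n : ℕ} (u y y' : Fin n → ℝ) (η : ℝ) (h : ∀ k, |y k - y' k| ≤ η) :
    |u ⬝ᵥ y - u ⬝ᵥ y'| ≤ (∑ k, |u k|) * η := by
  rw [← dotProduct_sub, Finset.sum_mul]
  refine (Finset.abs_sum_le_sum_abs _ _).trans (Finset.sum_le_sum fun k _ => ?_)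
  rw [abs_mul]
  exact mul_le_mul_of_nonneg_left (h k) (abs_nonneg _)

/-- **Hoffman's error bound**: for a fixed matrix `M`, the distance (in the maximum norm) from a
point to a nonempty polyhedron `{y : M y ≥ r}` is at most a constant, independent of `r`, times the
largest violation of the constraints. -/
lemma exists_hoffman_bound (n : ℕ) : ∀ (ι : Type) [Fintype ι] (M : ι → Fin n → ℝ),
    ∃ κ : ℝ, 0 ≤ κ ∧ ∀ r : ι → ℝ, (∃ y, ∀ i, r i ≤ M i ⬝ᵥ y) →
      ∀ δ : ℝ, 0 ≤ δ → ∀ yh : Fin n → ℝ, (∀ i, r i - δ ≤ M i ⬝ᵥ yh) →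
        ∃ y, (∀ i, r i ≤ M i ⬝ᵥ y) ∧ ∀ k, |y k - yh k| ≤ κ * δ := by
  induction n with
  | zero =>
    intro ι _ M
    refine ⟨0, le_rfl, fun r hr δ _ yh _ => ?_⟩
    obtain ⟨y, hy⟩ := hr
    exact ⟨y, hy, fun k => k.elim0⟩
  | succ n ih =>
    classical
    intro ι _ M
    set c : ι → ℝ := fun i => M i 0 with hc
    set N : ι → Fin n → ℝ := fun i k => M i k.succ with hN
    have hdot : ∀ i (y : Fin (n + 1) → ℝ),
        M i ⬝ᵥ y = c i * y 0 + N i ⬝ᵥ (fun k => y k.succ) := by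
      intro i y
      simp [dotProduct, Fin.sum_univ_succ, hc, hN]
    -- The row of the eliminated system indexed by `(i, j)` is `w i j • M i + u i j • M j`; it
    -- combines a lower with an upper bound, copies a row free of the variable, or is trivial.
    set w : ι → ι → ℝ := fun i j =>
      if 0 < c i ∧ c j < 0 then -c j else if c i = 0 then 1 else 0 with hw
    set u : ι → ι → ℝ := fun i j => if 0 < c i ∧ c j < 0 then c i else 0 with hu
    have hw0 : ∀ i j, 0 ≤ w i j := by
      intro i j; simp only [hw]; split_ifs with h1 h2 <;> first | linarith [h1.2] | norm_num
    have hu0 : ∀ i j, 0 ≤ u i j := by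
      intro i j; simp only [hu]; split_ifs with h1 <;> first | linarith [h1.1] | norm_num
    have hwu : ∀ i j, w i j * c i + u i j * c j = 0 := by
      intro i j; simp only [hw, hu]; split_ifs with h1 h2
      · ring
      · simp [h2]
      · simp
    set W : ℝ := ∑ i, ∑ j, (w i j + u i j) with hW
    have hWnn : 0 ≤ W :=
      Finset.sum_nonneg fun i _ => Finset.sum_nonneg fun j _ => add_nonneg (hw0 i j) (hu0 i j)
    have hWle : ∀ i j, w i j + u i j ≤ W := by
      intro i j
      refine (Finset.single_le_sum (f := fun j => w i j + u i j)
        (fun j _ => add_nonneg (hw0 i j) (hu0 i j)) (Finset.mem_univ j)).trans ?_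
      exact Finset.single_le_sum (f := fun i => ∑ j, (w i j + u i j))
        (fun i _ => Finset.sum_nonneg fun j _ => add_nonneg (hw0 i j) (hu0 i j))
        (Finset.mem_univ i)
    obtain ⟨κ, hκ, H⟩ := ih (ι × ι) (fun p => w p.1 p.2 • N p.1 + u p.1 p.2 • N p.2)
    set L : ℝ := ∑ i, ∑ k, |N i k| with hL
    have hLnn : 0 ≤ L := Finset.sum_nonneg fun i _ => Finset.sum_nonneg fun k _ => abs_nonneg _
    have hLle : ∀ i, ∑ k, |N i k| ≤ L := fun i =>
      Finset.single_le_sum (f := fun i => ∑ k, |N i k|)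
        (fun i _ => Finset.sum_nonneg fun k _ => abs_nonneg _) (Finset.mem_univ i)
    set K : ℝ := ∑ i, |c i|⁻¹ with hK
    have hKnn : 0 ≤ K := Finset.sum_nonneg fun i _ => by positivity
    refine ⟨κ * W + K * (1 + L * (κ * W)), by positivity, ?_⟩
    intro r hr δ hδ yh hyh
    obtain ⟨y₁, hy₁⟩ := hr
    have hcomb : ∀ i j (y : Fin (n + 1) → ℝ),
        (w i j • N i + u i j • N j) ⬝ᵥ (fun k => y k.succ)
          = w i j * (M i ⬝ᵥ y) + u i j * (M j ⬝ᵥ y) := by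
      intro i j y
      rw [add_dotProduct, smul_dotProduct, smul_dotProduct, hdot i, hdot j, smul_eq_mul,
        smul_eq_mul]
      linear_combination -(y 0) * hwu i j
    obtain ⟨y', hy', hdist⟩ := H (fun p => w p.1 p.2 * r p.1 + u p.1 p.2 * r p.2)
      ⟨fun k => y₁ k.succ, fun p => by
        rw [hcomb]
        exact add_le_add (mul_le_mul_of_nonneg_left (hy₁ _) (hw0 _ _))
          (mul_le_mul_of_nonneg_left (hy₁ _) (hu0 _ _))⟩
      (W * δ) (by positivity) (fun k => yh k.succ) (fun p => by
        rw [hcomb]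
        have h1 := mul_le_mul_of_nonneg_left (hyh p.1) (hw0 p.1 p.2)
        have h2 := mul_le_mul_of_nonneg_left (hyh p.2) (hu0 p.1 p.2)
        have h3 := mul_le_mul_of_nonneg_right (hWle p.1 p.2) hδ
        linarith)
    have hproj : ∀ i j, w i j * (r i - N i ⬝ᵥ y') + u i j * (r j - N j ⬝ᵥ y') ≤ 0 := by
      intro i j
      have := hy' (i, j)
      simp only [add_dotProduct, smul_dotProduct, smul_eq_mul] at this
      linarith
    have hviol : ∀ i, (r i - N i ⬝ᵥ y') - (1 + L * (κ * W)) * δ ≤ c i * yh 0 := by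
      intro i
      have h1 := hyh i
      rw [hdot] at h1
      have h2 := abs_dotProduct_sub_le (N i) y' (fun k => yh k.succ) _ hdist
      have h3 : (∑ k, |N i k|) * (κ * (W * δ)) ≤ L * (κ * (W * δ)) :=
        mul_le_mul_of_nonneg_right (hLle i) (by positivity)
      have h4 := (abs_le.1 (h2.trans h3)).1
      linarith
    obtain ⟨t, ht, htd⟩ := exists_near_solution_one_var c (fun i => r i - N i ⬝ᵥ y') (yh 0)
      ((1 + L * (κ * W)) * δ) (by positivity)
      (fun i hi => by
        have := hproj i i
        simpa [hw, hu, hi] using this)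
      (fun i j hi hj => by
        have := hproj i j
        simp only [hw, hu, if_pos (And.intro hi hj)] at this
        exact this)
      hviol
    refine ⟨Fin.cons t y', fun i => ?_, fun k => ?_⟩
    · rw [hdot]
      simp only [Fin.cons_zero, Fin.cons_succ]
      linarith [ht i]
    · have e1 : 0 ≤ κ * W * δ := by positivity
      have e2 : 0 ≤ K * (1 + L * (κ * W)) * δ := by positivity
      refine Fin.cases ?_ (fun k => ?_) k
      · simp only [Fin.cons_zero]
        linarith
      · simp only [Fin.cons_succ]
        linarith [hdist k]

/-- Weak duality for an approximately feasible dual vector `z`, tested against a feasible `y` of the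
system `D y ≥ q`. -/
lemma objective_gap_le {l n : ℕ} (D : Matrix (Fin l) (Fin n) ℝ) (d : Fin n → ℝ) (q : Fin l → ℝ)
    (ε : ℝ) (y yh : Fin n → ℝ) (z : Fin l → ℝ) (hy : ∀ j, q j ≤ D.mulVec y j)
    (hdual : ∀ k, |Dᵀ.mulVec z k - d k| ≤ ε) (hz : ∀ j, -ε ≤ z j)
    (hgap : d ⬝ᵥ yh - q ⬝ᵥ z ≤ ε) :
    d ⬝ᵥ yh ≤ d ⬝ᵥ y + ε * (1 + (∑ k, |y k| + ∑ j, (D.mulVec y j - q j))) := by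
  have h1 : 0 ≤ ∑ j, (D.mulVec y j - q j) * (z j + ε) :=
    Finset.sum_nonneg fun j _ => mul_nonneg (by linarith [hy j]) (by linarith [hz j])
  have h2 : ∑ j, (D.mulVec y j - q j) * (z j + ε)
      = D.mulVec y ⬝ᵥ z - q ⬝ᵥ z + ε * ∑ j, (D.mulVec y j - q j) := by
    simp only [dotProduct, Finset.mul_sum, ← Finset.sum_sub_distrib, ← Finset.sum_add_distrib]
    exact Finset.sum_congr rfl fun j _ => by ring
  have h3 : D.mulVec y ⬝ᵥ z = Dᵀ.mulVec z ⬝ᵥ y := by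
    rw [mulVec_transpose, ← dotProduct_mulVec, dotProduct_comm]
  have h4 : Dᵀ.mulVec z ⬝ᵥ y - d ⬝ᵥ y ≤ ε * ∑ k, |y k| := by
    rw [← sub_dotProduct, Finset.mul_sum]
    refine Finset.sum_le_sum fun k _ => (le_abs_self _).trans ?_
    rw [abs_mul]
    exact mul_le_mul_of_nonneg_right (hdual k) (abs_nonneg _)
  linarith

/-- Lower-level stability for the linear bilevel problem: under the stated
assumptions, there is a constant `κ > 0` (depending only on
`A, C, D, a, b, d`) such that for every feasible upper-level `x` (`Ax ≥ a`),
every `ε > 0`, and every pair `(ŷ, ẑ)` with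
(i) `Dŷ ≥ b − Cx − ε e_ℓ`, (ii) `‖D^⊤ẑ − d‖_∞ ≤ ε` and `ẑ ≥ −ε e_ℓ`, and
(iii) `d^⊤ŷ − (b − Cx)^⊤ẑ ≤ ε`, there is an optimal solution `y*` of the
`x`-parameterized lower-level problem with `‖y* − ŷ‖₁ ≤ ε κ`. -/
theorem stmt17 (m l nx ny : ℕ)
    (cx : Fin nx → ℝ) (cy d : Fin ny → ℝ)
    (A : Matrix (Fin m) (Fin nx) ℝ) (a : Fin m → ℝ)
    (C : Matrix (Fin l) (Fin nx) ℝ) (D : Matrix (Fin l) (Fin ny) ℝ)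
    (b : Fin l → ℝ)
    (hne : {p : (Fin nx → ℝ) × (Fin ny → ℝ) |
      (∀ i, a i ≤ A.mulVec p.1 i) ∧
      (∀ j, b j ≤ C.mulVec p.1 j + D.mulVec p.2 j)}.Nonempty)
    (hcpt : IsCompact {p : (Fin nx → ℝ) × (Fin ny → ℝ) |
      (∀ i, a i ≤ A.mulVec p.1 i) ∧
      (∀ j, b j ≤ C.mulVec p.1 j + D.mulVec p.2 j)})
    (hfeas : ∀ x : Fin nx → ℝ, (∀ i, a i ≤ A.mulVec x i) →
      ∃ y : Fin ny → ℝ, ∀ j, b j ≤ C.mulVec x j + D.mulVec y j)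
    (hxbdd : Bornology.IsBounded {x : Fin nx → ℝ | ∀ i, a i ≤ A.mulVec x i}) :
    ∃ κ : ℝ, 0 < κ ∧
      ∀ x : Fin nx → ℝ, (∀ i, a i ≤ A.mulVec x i) →
      ∀ ε : ℝ, 0 < ε →
      ∀ yh : Fin ny → ℝ, ∀ zh : Fin l → ℝ,
        (∀ j, b j - C.mulVec x j - ε ≤ D.mulVec yh j) →
        (∀ k, |Dᵀ.mulVec zh k - d k| ≤ ε) →
        (∀ j, -ε ≤ zh j) →
        d ⬝ᵥ yh - (fun j => b j - C.mulVec x j) ⬝ᵥ zh ≤ ε →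
        ∃ ys : Fin ny → ℝ,
          (∀ j, b j ≤ C.mulVec x j + D.mulVec ys j) ∧
          (∀ y : Fin ny → ℝ, (∀ j, b j ≤ C.mulVec x j + D.mulVec y j) →
            d ⬝ᵥ ys ≤ d ⬝ᵥ y) ∧
          ∑ k, |ys k - yh k| ≤ ε * κ := by
  set S : Set ((Fin nx → ℝ) × (Fin ny → ℝ)) := {p | (∀ i, a i ≤ A.mulVec p.1 i) ∧
      (∀ j, b j ≤ C.mulVec p.1 j + D.mulVec p.2 j)} with hS
  obtain ⟨B, hB⟩ := hcpt.exists_bound_of_continuousOn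
    (f := fun p => ∑ k, |p.2 k| + ∑ j, (C.mulVec p.1 j + D.mulVec p.2 j - b j))
    (by
      refine Continuous.continuousOn ?_
      simp only [mulVec, dotProduct]
      fun_prop)
  have hB0 : 0 ≤ B := by
    obtain ⟨p, hp⟩ := hne
    exact (norm_nonneg _).trans (hB p hp)
  -- The rows of `D` together with the objective row `-d`, which is indexed by `none`.
  obtain ⟨M, hMnone, hMsome⟩ : ∃ M : Option (Fin l) → Fin ny → ℝ,
      (∀ y, M none ⬝ᵥ y = -(d ⬝ᵥ y)) ∧ ∀ j y, M (some j) ⬝ᵥ y = D.mulVec y j :=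
    ⟨fun o => o.elim (-d) fun j => D j, fun y => neg_dotProduct d y, fun _ _ => rfl⟩
  obtain ⟨κ, hκ, H⟩ := exists_hoffman_bound ny (Option (Fin l)) M
  refine ⟨ny * (κ * (1 + B)) + 1, by positivity, ?_⟩
  intro x hx ε hε yh zh hprim hdual hz hgap
  obtain ⟨⟨x₀, y₀⟩, ⟨hy₀S, hx₀⟩, hmin⟩ :=
    (hcpt.inter_right (isClosed_eq continuous_fst (continuous_const (y := x)))).exists_isMinOn
      (f := fun p => d ⬝ᵥ p.2)
      (by
        obtain ⟨y, hy⟩ := hfeas x hx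
        exact ⟨(x, y), ⟨hx, hy⟩, rfl⟩)
      (by
        refine Continuous.continuousOn ?_
        simp only [dotProduct]
        fun_prop)
  obtain rfl : x₀ = x := hx₀
  have hopt : ∀ y, (∀ j, b j ≤ C.mulVec x₀ j + D.mulVec y j) → d ⬝ᵥ y₀ ≤ d ⬝ᵥ y :=
    fun y hy => hmin (show (x₀, y) ∈ _ from ⟨⟨hx, hy⟩, rfl⟩)
  have hgap' : d ⬝ᵥ yh ≤ d ⬝ᵥ y₀ + ε * (1 + B) := by
    refine (objective_gap_le D d _ ε y₀ yh zh (fun j => by linarith [hy₀S.2 j]) hdual hz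
      hgap).trans ?_
    have h1 := (le_abs_self _).trans (hB _ hy₀S)
    have h2 : ∑ j, (D.mulVec y₀ j - (b j - C.mulVec x₀ j))
        = ∑ j, (C.mulVec x₀ j + D.mulVec y₀ j - b j) :=
      Finset.sum_congr rfl fun j _ => by ring
    rw [h2]
    gcongr
  obtain ⟨ys, hys, hdist⟩ := H (fun o => o.elim (-(d ⬝ᵥ y₀)) fun j => b j - C.mulVec x₀ j)
    ⟨y₀, by
      rintro (_ | j)
      · simp [hMnone]
      · have := hy₀S.2 j
        simp only [Option.elim_some, hMsome]
        linarith⟩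
    (ε * (1 + B)) (by positivity) yh (by
      rintro (_ | j)
      · simp only [Option.elim_none, hMnone]
        linarith
      · have h1 := hprim j
        have h2 : 0 ≤ ε * B := by positivity
        simp only [Option.elim_some, hMsome]
        linarith)
  refine ⟨ys, fun j => ?_, fun y hy => ?_, ?_⟩
  · have := hys (some j)
    simp only [Option.elim_some, hMsome] at this
    linarith
  · have := hys none
    simp only [Option.elim_none, hMnone] at this
    linarith [hopt y hy]
  · have h1 : ∑ k, |ys k - yh k| ≤ ∑ _k : Fin ny, κ * (ε * (1 + B)) :=
      Finset.sum_le_sum fun k _ => hdist k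
    rw [Finset.sum_const, Finset.card_univ, Fintype.card_fin, nsmul_eq_mul] at h1
    linarith
end

section
/- Under the stated assumptions on the linear bilevel problem, for every κ₁ > 0 there exist constants κ₂, κ₃, κ₄, κ₅ > 0 (depending only on the problem data A, C, D, a, b, c_x, c_y, d and on κ₁) such that the following holds: for every ε > 0, every x̂ ∈ ℝ^{n_x} with A x̂ ≥ a − ε e_m, and every ŷ ∈ ℝ^{n_y}, ẑ ∈ ℝ^ℓ satisfying (i) D ŷ ≥ b − C x̂ − ε e_ℓ; (ii) ‖D^⊤ẑ − d‖_∞ ≤ ε and ẑ ≥ −ε e_ℓ; (iii) d^⊤ŷ − (b − C x̂)^⊤ẑ ≤ ε; and (iv) there exists a subset B ⊆ {1, …, ℓ} with |B| = n_y such that the n_y × n_y submatrix of D^⊤ formed by the columns indexed by B is invertible and, with z_B ∈ ℝ^{n_y} the unique solution of this submatrix times z_B equal to d, one has ‖(ẑ restricted to B) − z_B‖_∞ ≤ ε κ₁ and ‖ẑ restricted to the complement of B‖_∞ ≤ ε; — there exists a pair (x*, y*) feasible for the bilevel problem (i.e., A x* ≥ a, D y* ≥ b − C x*, and d^⊤y*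 ≤ d^⊤y for every y with D y ≥ b − C x*) such that ‖(x*, y*) − (x̂, ŷ)‖₁ ≤ ε κ₂ + ε² κ₃ and |c_x^⊤x* + c_y^⊤y* − (c_x^⊤x̂ + c_y^⊤ŷ)| ≤ ε κ₄ + ε² κ₅. -/
/-!
The proof combines Hoffman's error bound with an approximate weak-duality estimate.

Hoffman's bound (`hoffman`): for a fixed matrix `M` there is `L` such that, whatever the right-hand
side `r`, a point violating a consistent system `M y ≥ r` by at most `δ` lies within `L δ` of a
solution. It is obtained here by Fourier-Motzkin elimination, by induction on the number of
variables.

Applied to `A x ≥ a` it yields `x*` with `‖x* - x̂‖ = O(ε)`. Compactness gives an optimal reaction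
`y₀` to `x*`, and the optimal reactions to `x*` are the solutions of the system `D y ≥ b - C x*`,
`-dᵀ y ≥ -dᵀ y₀`, whose matrix does not depend on `x*`. Hence Hoffman's bound provides an optimal
reaction `y*` close to `ŷ` as soon as `dᵀ ŷ - dᵀ y₀ = O(ε + ε²)`.

This last estimate is `duality_gap`. Extend `z_B` by zero to `z`; then `Dᵀ z = d` exactly,
`|ẑ - z| ≤ ε (1 + κ₁)` and therefore `z ≥ -ε (2 + κ₁)`. The vector `z` need not be nonnegative, but
since the slack `D y₀ - (b - C x*)` is bounded on the compact feasible set, weak duality holds up to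
an error `O(ε)`. The `z` in question are bounded because there are finitely many bases.
-/

open Matrix

/-- Hölder's inequality for the pair (1-norm, maximum norm). -/
lemma abs_dot_le {ι : Type*} [Fintype ι] (u v : ι → ℝ) {B : ℝ} (h : ∀ i, |v i| ≤ B) :
    |u ⬝ᵥ v| ≤ (∑ i, |u i|) * B := by
  rw [dotProduct, Finset.sum_mul]
  refine (Finset.abs_sum_le_sum_abs _ _).trans (Finset.sum_le_sum fun i _ => ?_)
  rw [abs_mul]
  exact mul_le_mul_of_nonneg_left (h i) (abs_nonneg _)

/-- The back-substitution step of Fourier-Motzkin elimination: a system `q i ≤ p i * t` in one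
variable which passes all pairwise consistency tests and is violated by `x` by at most `η |p i|`
has a solution within `η` of `x`. -/
lemma exists_one_dim {ι : Type*} [Fintype ι] (p q : ι → ℝ) (x η : ℝ) (hη : 0 ≤ η)
    (h0 : ∀ i, p i = 0 → q i ≤ 0)
    (hpn : ∀ i j, 0 < p i → p j < 0 → -p j * q i + p i * q j ≤ 0)
    (hx : ∀ i, p i ≠ 0 → q i - η * |p i| ≤ p i * x) :
    ∃ t, (∀ i, q i ≤ p i * t) ∧ |t - x| ≤ η := by
  classical
  -- `t` is the largest of the lower bounds `q i / p i`, `p i > 0`, and `x - η`.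
  let T : Finset ℝ := insert (x - η) ((Finset.univ.filter fun i => 0 < p i).image fun i => q i / p i)
  obtain ⟨t, htT, ht⟩ := T.exists_max_image id ⟨x - η, Finset.mem_insert_self _ _⟩
  have hlo : x - η ≤ t := ht _ (Finset.mem_insert_self _ _)
  have hpos : ∀ i, 0 < p i → q i / p i ≤ t := fun i hi =>
    ht _ (Finset.mem_insert_of_mem (Finset.mem_image_of_mem _ (by simpa using hi)))
  have hcase : t = x - η ∨ ∃ i, 0 < p i ∧ q i / p i = t := by
    simpa [T] using htT
  refine ⟨t, fun i => ?_, ?_⟩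
  · rcases lt_trichotomy (p i) 0 with hi | hi | hi
    · rcases hcase with h | ⟨k, hk, h⟩
      · have := hx i hi.ne
        rw [abs_of_neg hi] at this
        rw [h]; linarith
      · have h1 := hpn k i hk hi
        have h2 : q k = t * p k := by rw [← h]; field_simp
        rw [h2] at h1
        have : p k * (q i - p i * t) ≤ 0 := by linarith
        by_contra hc
        push Not at hc
        have := mul_pos hk (sub_pos.mpr hc)
        linarith
    · rw [hi]; simpa using h0 i hi
    · have := (div_le_iff₀ hi).mp (hpos i hi)
      linarith
  · rw [abs_le]
    refine ⟨by linarith, ?_⟩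
    rcases hcase with h | ⟨k, hk, h⟩
    · linarith
    · have h1 := hx k hk.ne'
      rw [abs_of_pos hk] at h1
      have : q k / p k ≤ x + η := by rw [div_le_iff₀ hk]; linarith
      linarith

/-- Hoffman's error bound, with a constant independent of the right-hand side. -/
lemma hoffman (n : ℕ) : ∀ (ι : Type) [Fintype ι] (M : ι → Fin n → ℝ),
    ∃ L : ℝ, 0 ≤ L ∧ ∀ r : ι → ℝ, (∃ y, ∀ i, r i ≤ M i ⬝ᵥ y) →
      ∀ (x : Fin n → ℝ) (δ : ℝ), 0 ≤ δ → (∀ i, r i - δ ≤ M i ⬝ᵥ x) →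
        ∃ y, (∀ i, r i ≤ M i ⬝ᵥ y) ∧ ∀ k, |y k - x k| ≤ L * δ := by
  induction n with
  | zero =>
    intro ι _ M
    refine ⟨0, le_rfl, fun r ⟨y, hy⟩ x δ _ _ => ⟨y, hy, fun k => k.elim0⟩⟩
  | succ n ih =>
    intro ι _ M
    let p : ι → ℝ := fun i => M i 0
    let N : ι → Fin n → ℝ := fun i k => M i k.succ
    -- The constraint indexed by `(i, j)` of the projected system is `u (i, j)` times constraint `i`
    -- plus `v (i, j)` times constraint `j`, which eliminates the first variable.
    let u : ι × ι → ℝ := fun s =>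
      if p s.1 = 0 then 1 else if 0 < p s.1 ∧ p s.2 < 0 then -p s.2 else 0
    let v : ι × ι → ℝ := fun s =>
      if p s.1 = 0 then 0 else if 0 < p s.1 ∧ p s.2 < 0 then p s.1 else 0
    have hu : ∀ s, 0 ≤ u s := by
      intro s; simp only [u]; split_ifs with h1 h2
      · exact zero_le_one
      · linarith [h2.2]
      · exact le_rfl
    have hv : ∀ s, 0 ≤ v s := by
      intro s; simp only [v]; split_ifs with h1 h2
      · exact le_rfl
      · exact h2.1.le
      · exact le_rfl
    have huv : ∀ s, u s * p s.1 + v s * p s.2 = 0 := by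
      intro s; simp only [u, v]; split_ifs with h1 h2
      · simp [h1]
      · ring
      · ring
    obtain ⟨L', hL', H⟩ := ih (ι × ι) (fun s => u s • N s.1 + v s • N s.2)
    have hdot : ∀ s (w : Fin n → ℝ), (u s • N s.1 + v s • N s.2) ⬝ᵥ w =
        u s * (N s.1 ⬝ᵥ w) + v s * (N s.2 ⬝ᵥ w) := by
      intro s w; simp [add_dotProduct, smul_dotProduct]
    have hsplit : ∀ i (y : Fin (n + 1) → ℝ),
        M i ⬝ᵥ y = p i * y 0 + N i ⬝ᵥ (fun k => y k.succ) := by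
      intro i y; simp [dotProduct, Fin.sum_univ_succ, p, N]
    have hcomb : ∀ (r : ι → ℝ) (δ : ℝ) (y : Fin (n + 1) → ℝ), (∀ i, r i - δ ≤ M i ⬝ᵥ y) →
        ∀ s, u s * r s.1 + v s * r s.2 - (u s + v s) * δ ≤
          (u s • N s.1 + v s • N s.2) ⬝ᵥ (fun k => y k.succ) := by
      intro r δ y hy s
      have h1 := mul_le_mul_of_nonneg_left (hy s.1) (hu s)
      have h2 := mul_le_mul_of_nonneg_left (hy s.2) (hv s)
      rw [hsplit] at h1 h2
      rw [hdot]
      have h3 : (u s * p s.1 + v s * p s.2) * y 0 = 0 := by rw [huv, zero_mul]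
      linarith
    let K : ℝ := ∑ s, (u s + v s)
    have hK0 : 0 ≤ K := Finset.sum_nonneg fun s _ => add_nonneg (hu s) (hv s)
    have hK : ∀ s, u s + v s ≤ K := fun s =>
      Finset.single_le_sum (f := fun s => u s + v s)
        (fun s _ => add_nonneg (hu s) (hv s)) (Finset.mem_univ s)
    let S : ℝ := ∑ i, ∑ k, |N i k|
    have hS0 : 0 ≤ S := Finset.sum_nonneg fun i _ => Finset.sum_nonneg fun k _ => abs_nonneg _
    have hS : ∀ i, ∑ k, |N i k| ≤ S := fun i =>
      Finset.single_le_sum (f := fun i => ∑ k, |N i k|)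
        (fun i _ => Finset.sum_nonneg fun k _ => abs_nonneg _) (Finset.mem_univ i)
    -- Terms with `p i = 0` contribute `0⁻¹ = 0` to `Q`.
    let Q : ℝ := ∑ i, |p i|⁻¹
    have hQ0 : 0 ≤ Q := Finset.sum_nonneg fun i _ => by positivity
    have hQ : ∀ i, p i ≠ 0 → 1 ≤ Q * |p i| := by
      intro i hi
      have h1 : |p i|⁻¹ ≤ Q := Finset.single_le_sum (f := fun i => |p i|⁻¹)
        (fun i _ => by positivity) (Finset.mem_univ i)
      have h2 : 0 < |p i| := abs_pos.mpr hi
      calc (1 : ℝ) = |p i|⁻¹ * |p i| := by field_simp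
        _ ≤ _ := mul_le_mul_of_nonneg_right h1 h2.le
    have hE : 0 ≤ 1 + S * (L' * K) := by positivity
    refine ⟨Q * (1 + S * (L' * K)) + L' * K, by positivity, ?_⟩
    rintro r ⟨y₁, hy₁⟩ x δ hδ hx
    obtain ⟨y', hy', hd⟩ := H (fun s => u s * r s.1 + v s * r s.2)
      ⟨fun k => y₁ k.succ, fun s => by
        have := hcomb r 0 y₁ (by simpa using hy₁) s
        simpa using this⟩
      (fun k => x k.succ) (K * δ) (by positivity) (fun s => by
        have h1 := hcomb r δ x hx s
        have h2 := mul_le_mul_of_nonneg_right (hK s) hδ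
        linarith)
    have hclose : ∀ i, |N i ⬝ᵥ y' - N i ⬝ᵥ (fun k => x k.succ)| ≤ S * (L' * (K * δ)) := by
      intro i
      rw [← dotProduct_sub]
      refine (abs_dot_le _ _ (B := L' * (K * δ)) fun k => hd k).trans ?_
      exact mul_le_mul_of_nonneg_right (hS i) (by positivity)
    obtain ⟨t, ht, htx⟩ := exists_one_dim p (fun i => r i - N i ⬝ᵥ y') (x 0)
      (Q * (1 + S * (L' * K)) * δ) (by positivity)
      (by
        intro i hi
        have := hy' (i, i)
        rw [hdot] at this
        simp only [u, v, hi, if_true] at this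
        linarith)
      (by
        intro i j hi hj
        have := hy' (i, j)
        rw [hdot] at this
        simp only [u, v, hi.ne', hi, hj, if_false, and_self, if_true] at this
        linarith)
      (by
        intro i hi
        have h1 := hx i
        rw [hsplit] at h1
        have h2 := (abs_le.mp (hclose i)).1
        have h3 := mul_le_mul_of_nonneg_right (hQ i hi) (mul_nonneg hE hδ)
        nlinarith)
    refine ⟨Fin.cons t y', fun i => ?_, fun k => ?_⟩
    · rw [hsplit]
      have := ht i
      simp only [Fin.cons_zero, Fin.cons_succ]
      linarith
    · refine Fin.cases ?_ (fun k => ?_) k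
      · simp only [Fin.cons_zero]
        have : 0 ≤ L' * K * δ := by positivity
        linarith
      · simp only [Fin.cons_succ]
        have := hd k
        have : 0 ≤ Q * (1 + S * (L' * K)) * δ := by positivity
        linarith

/-- Approximate weak duality. Here `w` and `wh` stand for `b - C x*` and `b - C x̂`, and `z` is an
exact solution of `Dᵀ z = d` whose negative part is at most `θ`. -/
lemma duality_gap {l ny : ℕ} (D : Matrix (Fin l) (Fin ny) ℝ) (d y₀ yh : Fin ny → ℝ)
    (w wh z zh : Fin l → ℝ) {ε θ η R Z : ℝ} (hθ : 0 ≤ θ) (hη : 0 ≤ η)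
    (hz : Dᵀ.mulVec z = d) (hgap : d ⬝ᵥ yh - wh ⬝ᵥ zh ≤ ε)
    (hslack : ∀ j, w j ≤ D.mulVec y₀ j) (hslackR : ∀ j, D.mulVec y₀ j - w j ≤ R)
    (hwR : ∀ j, |w j| ≤ R) (hww : ∀ j, |wh j - w j| ≤ η)
    (hzneg : ∀ j, -θ ≤ z j) (hzz : ∀ j, |zh j - z j| ≤ θ) (hZ : ∑ j, |z j| ≤ Z) :
    d ⬝ᵥ yh - d ⬝ᵥ y₀ ≤ ε + l * (θ * R) + l * ((R + η) * θ) + Z * η := by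
  have h1 : d ⬝ᵥ y₀ = z ⬝ᵥ D.mulVec y₀ := by
    rw [dotProduct_mulVec, ← mulVec_transpose, hz]
  have h2 : -(l * (θ * R)) ≤ z ⬝ᵥ (D.mulVec y₀ - w) := by
    have : ∑ _j : Fin l, (-(θ * R)) ≤ z ⬝ᵥ (D.mulVec y₀ - w) := by
      refine Finset.sum_le_sum fun j _ => ?_
      have ha := hslack j
      have hb := mul_le_mul_of_nonneg_left (hslackR j) hθ
      have hc := mul_le_mul_of_nonneg_right (hzneg j) (sub_nonneg.mpr ha)
      simp only [Pi.sub_apply]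
      linarith
    simpa using this
  have h3 : wh ⬝ᵥ (zh - z) ≤ l * ((R + η) * θ) := by
    have : wh ⬝ᵥ (zh - z) ≤ ∑ _j : Fin l, (R + η) * θ := by
      refine Finset.sum_le_sum fun j _ => ?_
      have ha : |wh j| ≤ R + η := by
        have := abs_add_le (w j) (wh j - w j)
        rw [add_sub_cancel] at this
        linarith [hwR j, hww j]
      calc wh j * (zh - z) j ≤ |wh j * (zh - z) j| := le_abs_self _
        _ = |wh j| * |zh j - z j| := by rw [abs_mul]; rfl
        _ ≤ (R + η) * θ := mul_le_mul ha (hzz j) (abs_nonneg _) ((abs_nonneg _).trans ha)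
    simpa using this
  have h4 : z ⬝ᵥ (wh - w) ≤ Z * η :=
    (le_abs_self _).trans ((abs_dot_le z (wh - w) (B := η) hww).trans
      (mul_le_mul_of_nonneg_right hZ hη))
  rw [dotProduct_sub] at h2 h3 h4
  rw [dotProduct_comm z wh] at h4
  linarith

/-- Extension of a basic solution `zB` by zero, with the properties needed in `duality_gap`. -/
lemma exists_extension {l ny : ℕ} (D : Matrix (Fin l) (Fin ny) ℝ) (d zB : Fin ny → ℝ)
    (g : Fin ny → Fin l) (hg : Function.Injective g)
    (hB : (Dᵀ.submatrix id g).mulVec zB = d) (zh : Fin l → ℝ) {ε κ : ℝ} (hε : 0 ≤ ε) (hκ : 0 ≤ κ)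
    (h1 : ∀ r, |zh (g r) - zB r| ≤ ε * κ) (h2 : ∀ j, (∀ r, g r ≠ j) → |zh j| ≤ ε) :
    ∃ z : Fin l → ℝ, Dᵀ.mulVec z = d ∧ (∀ j, |zh j - z j| ≤ ε * (1 + κ)) ∧
      ∑ j, |z j| = ∑ r, |zB r| := by
  have hout : ∀ j : Fin l, (∀ r, g r ≠ j) → Function.extend g zB 0 j = 0 := by
    intro j hj
    rw [Function.extend_apply' _ _ _ (by rintro ⟨r, hr⟩; exact hj r hr)]
    rfl
  have hin : ∀ r, Function.extend g zB 0 (g r) = zB r := fun r => hg.extend_apply _ _ _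
  have hnot : ∀ j : Fin l, j ∉ g '' (↑(Finset.univ : Finset (Fin ny))) → ∀ r, g r ≠ j := by
    intro j hj r hr
    exact hj ⟨r, by simp, hr⟩
  refine ⟨Function.extend g zB 0, ?_, fun j => ?_, ?_⟩
  · rw [← hB]
    funext k
    symm
    refine Finset.sum_of_injOn (s := Finset.univ) (t := Finset.univ) g hg.injOn
      (by simp [Set.MapsTo]) (fun j _ hj => ?_) (fun r _ => ?_)
    · change Dᵀ k j * Function.extend g zB 0 j = 0
      rw [hout j (hnot j hj), mul_zero]
    · change Dᵀ k (g r) * zB r = Dᵀ k (g r) * Function.extend g zB 0 (g r)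
      rw [hin]
  · have : 0 ≤ ε * κ := mul_nonneg hε hκ
    by_cases hj : ∃ r, g r = j
    · obtain ⟨r, rfl⟩ := hj
      rw [hin]
      linarith [h1 r]
    · push Not at hj
      rw [hout j hj, sub_zero]
      linarith [h2 j hj]
  · symm
    refine Finset.sum_of_injOn g hg.injOn (by simp [Set.MapsTo]) (fun j _ hj => ?_) (fun r _ => ?_)
    · rw [hout j (hnot j hj), abs_zero]
    · rw [hin]

/-- The basic solutions `z_B` are bounded uniformly over the finitely many bases. -/
lemma exists_basic_bound {l ny : ℕ} (D : Matrix (Fin l) (Fin ny) ℝ) (d : Fin ny → ℝ) :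
    ∃ Z : ℝ, 0 ≤ Z ∧ ∀ g : Fin ny → Fin l, IsUnit (Dᵀ.submatrix id g).det →
      ∀ zB : Fin ny → ℝ, (Dᵀ.submatrix id g).mulVec zB = d → ∑ r, |zB r| ≤ Z := by
  let f : (Fin ny → Fin l) → ℝ := fun g => ∑ r, |((Dᵀ.submatrix id g)⁻¹.mulVec d) r|
  have hf : ∀ g, 0 ≤ f g := fun g => Finset.sum_nonneg fun r _ => abs_nonneg _
  refine ⟨∑ g, f g, Finset.sum_nonneg fun g _ => hf g, fun g hg zB h => ?_⟩
  have : zB = (Dᵀ.submatrix id g)⁻¹.mulVec d := by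
    rw [← h, mulVec_mulVec, nonsing_inv_mul _ hg, one_mulVec]
  calc ∑ r, |zB r| = f g := by rw [this]
    _ ≤ _ := Finset.single_le_sum (fun g _ => hf g) (Finset.mem_univ g)

/-- Main stability theorem for the linear bilevel problem: under the stated
assumptions, for every `κ₁ > 0` there are constants `κ₂, κ₃, κ₄, κ₅ > 0`
(depending only on the data and `κ₁`) such that for every `ε > 0` and every
`(x̂, ŷ, ẑ)` with (i) `Ax̂ ≥ a − ε e_m` and `Dŷ ≥ b − Cx̂ − ε e_ℓ`,
(ii) `‖D^⊤ẑ − d‖_∞ ≤ ε` and `ẑ ≥ −ε e_ℓ`, (iii) `d^⊤ŷ − (b − Cx̂)^⊤ẑ ≤ ε`,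
and (iv) there is a basis `B` (an injective `g : Fin n_y → Fin ℓ`) with the
corresponding `n_y × n_y` submatrix of `D^⊤` invertible, whose unique solution
`z_B` of the basis system equals `d`, with `‖ẑ|_B − z_B‖_∞ ≤ ε κ₁` and
`‖ẑ|_{Bᶜ}‖_∞ ≤ ε` — there exists a bilevel-feasible pair `(x*, y*)` with
`‖(x*, y*) − (x̂, ŷ)‖₁ ≤ ε κ₂ + ε² κ₃` and
`|c_x^⊤x* + c_y^⊤y* − (c_x^⊤x̂ + c_y^⊤ŷ)| ≤ ε κ₄ + ε² κ₅`. -/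
theorem stmt18 (m l nx ny : ℕ)
    (cx : Fin nx → ℝ) (cy d : Fin ny → ℝ)
    (A : Matrix (Fin m) (Fin nx) ℝ) (a : Fin m → ℝ)
    (C : Matrix (Fin l) (Fin nx) ℝ) (D : Matrix (Fin l) (Fin ny) ℝ)
    (b : Fin l → ℝ)
    (hne : {p : (Fin nx → ℝ) × (Fin ny → ℝ) |
      (∀ i, a i ≤ A.mulVec p.1 i) ∧
      (∀ j, b j ≤ C.mulVec p.1 j + D.mulVec p.2 j)}.Nonempty)
    (hcpt : IsCompact {p : (Fin nx → ℝ) × (Fin ny → ℝ) |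
      (∀ i, a i ≤ A.mulVec p.1 i) ∧
      (∀ j, b j ≤ C.mulVec p.1 j + D.mulVec p.2 j)})
    (hfeas : ∀ x : Fin nx → ℝ, (∀ i, a i ≤ A.mulVec x i) →
      ∃ y : Fin ny → ℝ, ∀ j, b j ≤ C.mulVec x j + D.mulVec y j)
    (hxbdd : Bornology.IsBounded {x : Fin nx → ℝ | ∀ i, a i ≤ A.mulVec x i}) :
    ∀ κ1 : ℝ, 0 < κ1 →
    ∃ κ2 κ3 κ4 κ5 : ℝ, 0 < κ2 ∧ 0 < κ3 ∧ 0 < κ4 ∧ 0 < κ5 ∧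
      ∀ ε : ℝ, 0 < ε →
      ∀ xh : Fin nx → ℝ, (∀ i, a i - ε ≤ A.mulVec xh i) →
      ∀ yh : Fin ny → ℝ, ∀ zh : Fin l → ℝ,
        (∀ j, b j - C.mulVec xh j - ε ≤ D.mulVec yh j) →
        (∀ k, |Dᵀ.mulVec zh k - d k| ≤ ε) →
        (∀ j, -ε ≤ zh j) →
        d ⬝ᵥ yh - (fun j => b j - C.mulVec xh j) ⬝ᵥ zh ≤ ε →
        (∃ g : Fin ny → Fin l, Function.Injective g ∧
          IsUnit (Dᵀ.submatrix id g).det ∧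
          ∃ zB : Fin ny → ℝ, (Dᵀ.submatrix id g).mulVec zB = d ∧
            (∀ r, |zh (g r) - zB r| ≤ ε * κ1) ∧
            (∀ j : Fin l, (∀ r, g r ≠ j) → |zh j| ≤ ε)) →
        ∃ xs : Fin nx → ℝ, ∃ ys : Fin ny → ℝ,
          (∀ i, a i ≤ A.mulVec xs i) ∧
          (∀ j, b j ≤ C.mulVec xs j + D.mulVec ys j) ∧
          (∀ y : Fin ny → ℝ, (∀ j, b j ≤ C.mulVec xs j + D.mulVec y j) →
            d ⬝ᵥ ys ≤ d ⬝ᵥ y) ∧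
          (∑ i, |xs i - xh i|) + (∑ k, |ys k - yh k|) ≤ ε * κ2 + ε ^ 2 * κ3 ∧
          |cx ⬝ᵥ xs + cy ⬝ᵥ ys - (cx ⬝ᵥ xh + cy ⬝ᵥ yh)| ≤
            ε * κ4 + ε ^ 2 * κ5 := by
  intro κ1 hκ1
  set F : Set ((Fin nx → ℝ) × (Fin ny → ℝ)) := {p |
      (∀ i, a i ≤ A.mulVec p.1 i) ∧ (∀ j, b j ≤ C.mulVec p.1 j + D.mulVec p.2 j)} with hF
  obtain ⟨L1, hL1, H1⟩ := hoffman nx (Fin m) (fun i => A i)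
  -- The row indexed by `none` is the optimality constraint of the lower level.
  obtain ⟨L2, hL2, H2⟩ := hoffman ny (Option (Fin l)) (fun o => o.elim (-d) (fun j => D j))
  obtain ⟨Z, hZ0, hZ⟩ := exists_basic_bound D d
  -- `R` bounds the slack and the right-hand side of the lower level on the feasible set.
  obtain ⟨R, hR⟩ : ∃ R : ℝ, ∀ p ∈ F,
      ∑ j, (|C.mulVec p.1 j + D.mulVec p.2 j - b j| + |b j - C.mulVec p.1 j|) ≤ R := by
    have hc : Continuous fun p : (Fin nx → ℝ) × (Fin ny → ℝ) =>
        ∑ j, (|C.mulVec p.1 j + D.mulVec p.2 j - b j| + |b j - C.mulVec p.1 j|) := by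
      simp only [mulVec, dotProduct]
      fun_prop
    obtain ⟨R, hR⟩ := hcpt.bddAbove_image hc.continuousOn
    exact ⟨R, fun p hp => hR ⟨p, hp, rfl⟩⟩
  have hR0 : 0 ≤ R := by
    obtain ⟨p, hp⟩ := hne
    exact le_trans (Finset.sum_nonneg fun j _ => by positivity) (hR p hp)
  have hRj : ∀ p ∈ F, ∀ j, C.mulVec p.1 j + D.mulVec p.2 j - b j ≤ R ∧
      |b j - C.mulVec p.1 j| ≤ R := by
    intro p hp j
    have h1 := Finset.single_le_sum
      (f := fun j => |C.mulVec p.1 j + D.mulVec p.2 j - b j| + |b j - C.mulVec p.1 j|)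
      (fun j _ => by positivity) (Finset.mem_univ j)
    have h2 := h1.trans (hR p hp)
    have h3 := le_abs_self (C.mulVec p.1 j + D.mulVec p.2 j - b j)
    exact ⟨by linarith [abs_nonneg (b j - C.mulVec p.1 j)],
      by linarith [abs_nonneg (C.mulVec p.1 j + D.mulVec p.2 j - b j)]⟩
  let S : ℝ := ∑ j, ∑ k, |C j k|
  have hS0 : 0 ≤ S := Finset.sum_nonneg fun i _ => Finset.sum_nonneg fun k _ => abs_nonneg _
  have hS : ∀ j, ∑ k, |C j k| ≤ S := fun j =>
    Finset.single_le_sum (f := fun j => ∑ k, |C j k|)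
      (fun i _ => Finset.sum_nonneg fun k _ => abs_nonneg _) (Finset.mem_univ j)
  have hreact : ∀ x : Fin nx → ℝ, (∀ i, a i ≤ A.mulVec x i) → ∃ y₀ : Fin ny → ℝ,
      (x, y₀) ∈ F ∧ ∀ y, (x, y) ∈ F → d ⬝ᵥ y₀ ≤ d ⬝ᵥ y := by
    intro x hx
    obtain ⟨y, hy⟩ := hfeas x hx
    have hcl : IsClosed {p : (Fin nx → ℝ) × (Fin ny → ℝ) | p.1 = x} :=
      isClosed_eq continuous_fst continuous_const
    have hc : Continuous fun p : (Fin nx → ℝ) × (Fin ny → ℝ) => d ⬝ᵥ p.2 := by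
      simp only [dotProduct]
      fun_prop
    obtain ⟨⟨x', y₀⟩, ⟨h1, h2⟩, h3⟩ :=
      (hcpt.inter_right hcl).exists_isMinOn ⟨(x, y), ⟨hx, hy⟩, rfl⟩ hc.continuousOn
    obtain rfl : x' = x := h2
    exact ⟨y₀, h1, fun y hy => h3 ⟨hy, rfl⟩⟩
  let k1 : ℝ := 1 + S * L1 + (1 + l * ((2 + κ1) * R) + l * (R * (2 + κ1)) + Z * (S * L1))
  let k2 : ℝ := l * ((S * L1) * (2 + κ1))
  have hk1 : 0 ≤ k1 := by positivity
  have hk2 : 0 ≤ k2 := by positivity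
  let κ2 : ℝ := nx * L1 + ny * (L2 * k1) + 1
  let κ3 : ℝ := ny * (L2 * k2) + 1
  let T : ℝ := ∑ i, |cx i| + ∑ k, |cy k| + 1
  have hκ2 : 0 < κ2 := by positivity
  have hκ3 : 0 < κ3 := by positivity
  have hT : 0 < T := by positivity
  refine ⟨κ2, κ3, T * κ2, T * κ3, hκ2, hκ3, by positivity, by positivity, ?_⟩
  rintro ε hε xh hxh yh zh hyh - hzh hgap ⟨g, hg, hdet, zB, hzB, hz1, hz2⟩
  obtain ⟨xs, hxs, hxd⟩ := H1 a (by obtain ⟨p, hp⟩ := hne; exact ⟨p.1, hp.1⟩) xh ε hε.le hxh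
  obtain ⟨y₀, hy₀, hopt⟩ := hreact xs hxs
  have hCx : ∀ j, |C.mulVec xs j - C.mulVec xh j| ≤ S * L1 * ε := by
    intro j
    have h1 : C.mulVec xs j - C.mulVec xh j = C j ⬝ᵥ (xs - xh) := by
      rw [dotProduct_sub]; rfl
    rw [h1, mul_assoc]
    exact (abs_dot_le _ _ (B := L1 * ε) hxd).trans
      (mul_le_mul_of_nonneg_right (hS j) (by positivity))
  obtain ⟨z, hzd, hzz, hzs⟩ := exists_extension D d zB g hg hzB zh hε.le hκ1.le hz1 hz2
  have hgap' := duality_gap D d y₀ yh (fun j => b j - C.mulVec xs j)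
    (fun j => b j - C.mulVec xh j) z zh (ε := ε) (θ := ε * (2 + κ1)) (η := S * L1 * ε) (R := R)
    (Z := Z) (by positivity) (by positivity) hzd hgap
    (fun j => by linarith [hy₀.2 j]) (fun j => by linarith [(hRj _ hy₀ j).1])
    (fun j => (hRj _ hy₀ j).2)
    (fun j => by
      have h1 := hCx j
      rwa [show b j - C.mulVec xh j - (b j - C.mulVec xs j) =
        C.mulVec xs j - C.mulVec xh j by ring])
    (fun j => by linarith [hzh j, (abs_le.mp (hzz j)).2])
    (fun j => by linarith [hzz j]) (hzs.le.trans (hZ g hdet zB hzB))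
  have hδ : 0 ≤ k1 * ε + k2 * ε ^ 2 := by positivity
  have hp1 : 0 ≤ (1 + l * ((2 + κ1) * R) + l * (R * (2 + κ1)) + Z * (S * L1)) * ε := by positivity
  have hp2 : 0 ≤ k2 * ε ^ 2 := by positivity
  have hp3 : 0 ≤ (1 + S * L1) * ε := by positivity
  obtain ⟨ys, hys, hyd⟩ := H2 (fun o => o.elim (-(d ⬝ᵥ y₀)) (fun j => b j - C.mulVec xs j))
    ⟨y₀, by
      rintro (_ | j)
      · simp
      · have h1 := hy₀.2 j
        change b j - C.mulVec xs j ≤ D.mulVec y₀ j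
        linarith⟩
    yh (k1 * ε + k2 * ε ^ 2) hδ (by
      rintro (_ | j)
      · simp only [Option.elim, neg_dotProduct]
        simp only [k1, k2] at *
        linarith
      · change b j - C.mulVec xs j - (k1 * ε + k2 * ε ^ 2) ≤ D.mulVec yh j
        have h1 := hyh j
        have h2 := (abs_le.mp (hCx j)).1
        simp only [k1, k2] at *
        linarith)
  have hysD : ∀ j, b j ≤ C.mulVec xs j + D.mulVec ys j := by
    intro j
    have h1 : b j - C.mulVec xs j ≤ D.mulVec ys j := hys (some j)
    linarith
  have hysd : d ⬝ᵥ ys ≤ d ⬝ᵥ y₀ := by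
    have h1 := hys none
    simp only [Option.elim, neg_dotProduct] at h1
    linarith
  have hdist : (∑ i, |xs i - xh i|) + (∑ k, |ys k - yh k|) ≤ ε * κ2 + ε ^ 2 * κ3 := by
    have h1 : ∑ i, |xs i - xh i| ≤ ∑ _i : Fin nx, L1 * ε := Finset.sum_le_sum fun i _ => hxd i
    have h2 : ∑ k, |ys k - yh k| ≤ ∑ _k : Fin ny, L2 * (k1 * ε + k2 * ε ^ 2) :=
      Finset.sum_le_sum fun k _ => hyd k
    simp only [Finset.sum_const, Finset.card_univ, Fintype.card_fin, nsmul_eq_mul] at h1 h2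
    simp only [κ2, κ3]
    have : 0 ≤ ε ^ 2 := by positivity
    linarith
  refine ⟨xs, ys, hxs, hysD, fun y hy => hysd.trans (hopt y ⟨hxs, hy⟩), hdist, ?_⟩
  set W : ℝ := (∑ i, |xs i - xh i|) + (∑ k, |ys k - yh k|) with hW
  have hsx : 0 ≤ ∑ i, |xs i - xh i| := Finset.sum_nonneg fun i _ => abs_nonneg _
  have hsy : 0 ≤ ∑ k, |ys k - yh k| := Finset.sum_nonneg fun i _ => abs_nonneg _
  have hX : |cx ⬝ᵥ (xs - xh)| ≤ (∑ i, |cx i|) * W := by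
    refine abs_dot_le _ _ fun i => ?_
    have := Finset.single_le_sum (f := fun i => |xs i - xh i|)
      (fun i _ => abs_nonneg _) (Finset.mem_univ i)
    simp only [Pi.sub_apply] at this ⊢
    linarith
  have hY : |cy ⬝ᵥ (ys - yh)| ≤ (∑ k, |cy k|) * W := by
    refine abs_dot_le _ _ fun i => ?_
    have := Finset.single_le_sum (f := fun i => |ys i - yh i|)
      (fun i _ => abs_nonneg _) (Finset.mem_univ i)
    simp only [Pi.sub_apply] at this ⊢
    linarith
  have hW0 : 0 ≤ W := add_nonneg hsx hsy
  calc |cx ⬝ᵥ xs + cy ⬝ᵥ ys - (cx ⬝ᵥ xh + cy ⬝ᵥ yh)|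
      = |cx ⬝ᵥ (xs - xh) + cy ⬝ᵥ (ys - yh)| := by
        rw [dotProduct_sub, dotProduct_sub]; congr 1; ring
    _ ≤ |cx ⬝ᵥ (xs - xh)| + |cy ⬝ᵥ (ys - yh)| := abs_add_le _ _
    _ ≤ T * W := by simp only [T]; linarith
    _ ≤ T * (ε * κ2 + ε ^ 2 * κ3) := mul_le_mul_of_nonneg_left hdist hT.le
    _ = ε * (T * κ2) + ε ^ 2 * (T * κ3) := by ring
end
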